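/- Let X_s be a T×N_s and X_c a T×N_c complex matrix, let γ₁, γ₂, γ₃ ≥ 0 with γ₁ + γ₂ > 0, assume the columns of X_c are linearly independent, and set A = 2((γ₁+γ₂)·I + γ₃·X_s X_s*). Then Û_s = 2(γ₂+γ₃) · A⁻¹ (I − X_c (X_c* A⁻¹ X_c)⁻¹ X_c* A⁻¹) X_s is a global minimizer of f(U) = γ₁‖U‖_F² + γ₂‖U − X_s‖_F² + γ₃‖X_s* U − I‖_F² over all T×N_s complex matrices U satisfying X_c* U = 0; that is, X_c* Û_s = 0 and f(Û_s) ≤ f(V) for every V with X_c* V = 0. -/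

import Mathlib

open Matrix

/-- Squared Frobenius norm of a complex matrix: `‖M‖_F² = Σ_{i,j} |M i j|²`. -/
noncomputable def frobSq {m n : ℕ} (M : Matrix (Fin m) (Fin n) ℂ) : ℝ :=
  ∑ i, ∑ j, ‖M i j‖ ^ 2

open scoped ComplexOrder

lemma frobSq_eq_aux {m n : ℕ} (M : Matrix (Fin m) (Fin n) ℂ) :
    frobSq M = (trace (Mᴴ * M)).re := by
  unfold frobSq
  simp only [trace, diag_apply, mul_apply, conjTranspose_apply, Complex.re_sum]
  rw [Finset.sum_comm]
  refine Finset.sum_congr rfl fun j _ => Finset.sum_congr rfl fun i _ => ?_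
  rw [← Complex.normSq_eq_norm_sq, Complex.normSq_apply]
  simp

lemma frobSq_nonneg_aux {m n : ℕ} (M : Matrix (Fin m) (Fin n) ℂ) : 0 ≤ frobSq M := by
  unfold frobSq
  positivity

lemma frobSq_add_aux {m n : ℕ} (M D : Matrix (Fin m) (Fin n) ℂ) :
    frobSq (M + D) = frobSq M + frobSq D + 2 * (trace (Dᴴ * M)).re := by
  have h : (trace (Mᴴ * D)).re = (trace (Dᴴ * M)).re := by
    have : Mᴴ * D = (Dᴴ * M)ᴴ := by simp
    rw [this, trace_conjTranspose]
    simp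
  simp only [frobSq_eq_aux, conjTranspose_add, Matrix.add_mul, Matrix.mul_add, trace_add,
    Complex.add_re, h]
  ring

/-- With `γᵢ ≥ 0`, `γ₁+γ₂ > 0`, `X_c` having linearly independent columns,
and `A = 2((γ₁+γ₂)·I + γ₃·X_s X_sᴴ)`, the closed-form matrix
`Û_s = 2(γ₂+γ₃)·A⁻¹ (I − X_c (X_cᴴ A⁻¹ X_c)⁻¹ X_cᴴ A⁻¹) X_s`
is a global minimizer of `f(U) = γ₁‖U‖_F² + γ₂‖U − X_s‖_F² + γ₃‖X_sᴴ U − I‖_F²`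
over all `U` with `X_cᴴ U = 0`: it is feasible and `f(Û_s) ≤ f(V)` for all feasible `V`. -/
theorem stmt_5 (T Ns Nc : ℕ)
    (Xs : Matrix (Fin T) (Fin Ns) ℂ) (Xc : Matrix (Fin T) (Fin Nc) ℂ)
    (γ₁ γ₂ γ₃ : ℝ) (h1 : 0 ≤ γ₁) (h2 : 0 ≤ γ₂) (h3 : 0 ≤ γ₃)
    (hpos : 0 < γ₁ + γ₂)
    (hXc : Function.Injective (fun v : Fin Nc → ℂ => Xc.mulVec v))
    (f : Matrix (Fin T) (Fin Ns) ℂ → ℝ)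
    (hf : ∀ U, f U = γ₁ * frobSq U + γ₂ * frobSq (U - Xs)
      + γ₃ * frobSq (Xsᴴ * U - (1 : Matrix (Fin Ns) (Fin Ns) ℂ)))
    (A : Matrix (Fin T) (Fin T) ℂ)
    (hA : A = (2 : ℝ) • ((γ₁ + γ₂) • (1 : Matrix (Fin T) (Fin T) ℂ) + γ₃ • (Xs * Xsᴴ)))
    (Uhat : Matrix (Fin T) (Fin Ns) ℂ)
    (hU : Uhat = (2 * (γ₂ + γ₃)) •
      (A⁻¹ * ((1 : Matrix (Fin T) (Fin T) ℂ)
        - Xc * (Xcᴴ * A⁻¹ * Xc)⁻¹ * Xcᴴ * A⁻¹) * Xs)) :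
    Xcᴴ * Uhat = 0 ∧
      ∀ V : Matrix (Fin T) (Fin Ns) ℂ, Xcᴴ * V = 0 → f Uhat ≤ f V := by
  have hPD : A.PosDef := by
    rw [hA]
    have e1 : ((γ₁ + γ₂) • (1 : Matrix (Fin T) (Fin T) ℂ)).PosDef := PosDef.one.smul hpos
    have e2 : (γ₃ • (Xs * Xsᴴ)).PosSemidef := (posSemidef_self_mul_conjTranspose Xs).smul h3
    exact (e1.add_posSemidef e2).smul (by norm_num : (0:ℝ) < 2)
  have hB : (Xcᴴ * A⁻¹ * Xc).PosDef := hPD.inv.conjTranspose_mul_mul_same hXc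
  have hAu : IsUnit A.det := (isUnit_iff_isUnit_det A).1 hPD.isUnit
  have hBu : IsUnit (Xcᴴ * A⁻¹ * Xc).det := (isUnit_iff_isUnit_det _).1 hB.isUnit
  have hfeas : Xcᴴ * Uhat = 0 := by
    have e : Xcᴴ * (A⁻¹ * (1 - Xc * (Xcᴴ * A⁻¹ * Xc)⁻¹ * Xcᴴ * A⁻¹) * Xs)
        = Xcᴴ * A⁻¹ * Xs - (Xcᴴ * A⁻¹ * Xc) * (Xcᴴ * A⁻¹ * Xc)⁻¹ * (Xcᴴ * A⁻¹ * Xs) := by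
      simp only [Matrix.mul_sub, Matrix.sub_mul, Matrix.mul_one, Matrix.mul_assoc]
    rw [hU, Matrix.mul_smul, e, mul_nonsing_inv _ hBu, Matrix.one_mul, sub_self, smul_zero]
  refine ⟨hfeas, fun V hV => ?_⟩
  obtain ⟨W, hW⟩ : ∃ W : Matrix (Fin Nc) (Fin Ns) ℂ,
      A * Uhat = (2 * (γ₂ + γ₃)) • Xs + Xc * W := by
    refine ⟨-((2 * (γ₂ + γ₃)) • ((Xcᴴ * A⁻¹ * Xc)⁻¹ * Xcᴴ * A⁻¹ * Xs)), ?_⟩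
    rw [hU, Matrix.mul_smul, Matrix.mul_assoc A⁻¹, mul_nonsing_inv_cancel_left _ _ hAu,
      Matrix.mul_neg, Matrix.mul_smul, ← sub_eq_add_neg, ← smul_sub]
    simp only [Matrix.sub_mul, Matrix.one_mul, Matrix.mul_assoc]
  obtain ⟨D, rfl⟩ : ∃ D, V = Uhat + D := ⟨V - Uhat, by simp⟩
  have hD : Xcᴴ * D = 0 := by simpa [Matrix.mul_add, hfeas] using hV
  have hDX : Dᴴ * Xc = 0 := by
    have := congrArg conjTranspose hD
    simpa using this
  have hG : (trace (Dᴴ * (A * Uhat))).re = (2 * (γ₂ + γ₃)) * (trace (Dᴴ * Xs)).re := by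
    rw [hW, Matrix.mul_add, ← Matrix.mul_assoc, hDX]
    simp
  have hG2 : (trace (Dᴴ * (A * Uhat))).re = 2 * ((γ₁ + γ₂) * (trace (Dᴴ * Uhat)).re
      + γ₃ * (trace (Dᴴ * (Xs * (Xsᴴ * Uhat)))).re) := by
    rw [hA]
    simp [Matrix.add_mul, Matrix.mul_add, Matrix.mul_assoc]
    ring
  have r1 : Uhat + D - Xs = (Uhat - Xs) + D := by abel
  have r2 : Xsᴴ * (Uhat + D) - 1 = (Xsᴴ * Uhat - 1) + Xsᴴ * D := by
    rw [Matrix.mul_add]; abel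
  rw [hf, hf, r1, r2, frobSq_add_aux, frobSq_add_aux, frobSq_add_aux]
  have q1 : (trace (Dᴴ * (Uhat - Xs))).re = (trace (Dᴴ * Uhat)).re - (trace (Dᴴ * Xs)).re := by
    simp [Matrix.mul_sub]
  have q2 : (trace ((Xsᴴ * D)ᴴ * (Xsᴴ * Uhat - 1))).re
      = (trace (Dᴴ * (Xs * (Xsᴴ * Uhat)))).re - (trace (Dᴴ * Xs)).re := by
    simp [Matrix.mul_sub, Matrix.mul_assoc]
  rw [q1, q2]
  have n1 := mul_nonneg h1 (frobSq_nonneg_aux D)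
  have n2 := mul_nonneg h2 (frobSq_nonneg_aux D)
  have n3 := mul_nonneg h3 (frobSq_nonneg_aux (Xsᴴ * D))
  rw [hG2] at hG
  linarith
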